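/- Let q ∈ L¹[0,1] be a real-valued integrable function and let t ∈ [0,2π) be fixed. If for every n ∈ ℕ (n ≥ 1) the number (2nπ − t)² is an eigenvalue of the quasi-periodic problem L_t(q), then ∫₀¹ q(x) dx = 0. -/

import Mathlib

open MeasureTheory Set

/-- `IsQPEigenpair q t lam y g h` says that `y` (with first derivative `g` and
second derivative `h`) is an eigenfunction of the quasi-periodic problem
`L_t(q)` on `[0,1]` with eigenvalue `lam`: `y` is nonzero, continuously
differentiable on `[0,1]` with derivative `g`, `g` is absolutely continuous
with a.e. derivative `h` (encoded via the fundamental theorem of calculus with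
`h` integrable), the equation `-y'' + q y = lam y` holds a.e. on `[0,1]`, and
the quasi-periodic boundary conditions hold. -/
def IsQPEigenpair (q : ℝ → ℝ) (t : ℝ) (lam : ℂ) (y g h : ℝ → ℂ) : Prop :=
  (∃ x ∈ Icc (0:ℝ) 1, y x ≠ 0) ∧
  (∀ x ∈ Icc (0:ℝ) 1, HasDerivWithinAt y (g x) (Icc (0:ℝ) 1) x) ∧
  ContinuousOn g (Icc (0:ℝ) 1) ∧
  IntegrableOn h (Icc (0:ℝ) 1) ∧
  (∀ x ∈ Icc (0:ℝ) 1, g x = g 0 + ∫ s in (0:ℝ)..x, h s) ∧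
  (∀ᵐ x ∂(volume.restrict (Icc (0:ℝ) 1)), -h x + (q x : ℂ) * y x = lam * y x) ∧
  y 1 = Complex.exp (Complex.I * t) * y 0 ∧
  g 1 = Complex.exp (Complex.I * t) * g 0

/-- `lam` is an eigenvalue of the quasi-periodic problem `L_t(q)`. -/
def IsQPEigenvalue (q : ℝ → ℝ) (t : ℝ) (lam : ℂ) : Prop :=
  ∃ y g h : ℝ → ℂ, IsQPEigenpair q t lam y g h

/-!
With `μ = iω`, variation of parameters writes a solution of `-y'' + q y = ω² y` as
`2μ y = exp (μx) F_μ - exp (-μx) F_{-μ}`, where `F_{±μ}' = exp (∓μx) q y`, so the amplitudes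
`F_{±μ}` are nearly constant. If `exp (iω) exp (it) = 1`, the boundary conditions become
`F_{-μ}(1) = F_{-μ}(0)` and `F_μ(1) = exp (it)² F_μ(0)`. Integrating the amplitude equations and
inserting the representation of `y` gives, up to a relative error `O(1/ω)`, a homogeneous
2 × 2 linear system for `(F_μ(0), F_{-μ}(0))` with diagonal entries `∫ q - 2μ (exp (it)² - 1)` and
`∫ q` and with off-diagonal entries `-∫ q exp (∓2μx)`. The latter vanish in the limit by the
Riemann–Lebesgue lemma. For large `ω` the first diagonal entry is at least `|∫ q|` in absolute
value, whether `exp (it)² = 1` or not, so a nontrivial solution forces `∫ q = 0`.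
-/

open Filter Topology

section AbsolutelyContinuous

variable {F : Type*} [NormedAddCommGroup F] [NormedSpace ℝ F] {f f' : ℝ → F} {a b : ℝ}

theorem absolutelyContinuousOnInterval_of_eq_add_integral (hf' : IntervalIntegrable f' volume a b)
    (hf : ∀ x ∈ uIcc a b, f x = f a + ∫ s in a..x, f' s) :
    AbsolutelyContinuousOnInterval f a b := by
  have hnorm : AbsolutelyContinuousOnInterval (fun x ↦ ∫ s in a..x, ‖f' s‖) a b :=
    hf'.norm.absolutelyContinuousOnInterval_intervalIntegral left_mem_uIcc
  have hdist : ∀ x ∈ uIcc a b, ∀ y ∈ uIcc a b,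
      dist (f x) (f y) ≤ dist (∫ s in a..x, ‖f' s‖) (∫ s in a..y, ‖f' s‖) := by
    intro x hx y hy
    have hax := hf'.mono_set (uIcc_subset_uIcc_left hx)
    have hay := hf'.mono_set (uIcc_subset_uIcc_left hy)
    rw [hf x hx, hf y hy, dist_add_left, dist_eq_norm, Real.dist_eq,
      intervalIntegral.integral_interval_sub_left hax hay,
      intervalIntegral.integral_interval_sub_left hax.norm hay.norm]
    exact intervalIntegral.norm_integral_le_abs_integral_norm
  rw [absolutelyContinuousOnInterval_iff] at hnorm ⊢
  intro ε hε
  obtain ⟨δ, hδ, hsum⟩ := hnorm ε hε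
  exact ⟨δ, hδ, fun E hE hlen ↦ (Finset.sum_le_sum fun i hi ↦
    hdist _ (hE.1 i hi).1 _ (hE.1 i hi).2).trans_lt (hsum E hE hlen)⟩

theorem absolutelyContinuousOnInterval_of_hasDerivWithinAt_of_norm_le {C : ℝ}
    (hf : ∀ x ∈ uIcc a b, HasDerivWithinAt f (f' x) (uIcc a b) x)
    (hC : ∀ x ∈ uIcc a b, ‖f' x‖ ≤ C) : AbsolutelyContinuousOnInterval f a b :=
  ((convex_uIcc a b).lipschitzOnWith_of_nnnorm_hasDerivWithin_le (C := C.toNNReal) hf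
    fun x hx ↦ NNReal.coe_le_coe.1 <| (hC x hx).trans C.le_coe_toNNReal)
    |>.absolutelyContinuousOnInterval

variable [CompleteSpace F]

theorem ae_hasDerivAt_of_eq_add_integral (hf' : IntervalIntegrable f' volume a b)
    (hf : ∀ x ∈ uIcc a b, f x = f a + ∫ s in a..x, f' s) :
    ∀ᵐ x, x ∈ uIcc a b → HasDerivAt f (f' x) x := by
  filter_upwards [hf'.ae_hasDerivAt_integral, Measure.ae_ne volume (min a b),
    Measure.ae_ne volume (max a b)] with x hx hmin hmax hmem
  refine ((hx hmem a left_mem_uIcc).const_add (f a)).congr_of_eventuallyEq ?_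
  exact eventually_of_mem (Icc_mem_nhds (lt_of_le_of_ne hmem.1 hmin.symm)
    (lt_of_le_of_ne hmem.2 hmax)) hf

theorem integral_eq_sub_of_ae_hasDerivAt (hf : AbsolutelyContinuousOnInterval f a b)
    (hderiv : ∀ᵐ x, x ∈ uIcc a b → HasDerivAt f (f' x) x)
    (hf' : IntervalIntegrable f' volume a b) : ∫ s in a..b, f' s = f b - f a := by
  have hprim : AbsolutelyContinuousOnInterval (fun x ↦ ∫ s in a..x, f' s) a b :=
    absolutelyContinuousOnInterval_of_eq_add_integral hf' fun x _ ↦ by simp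
  obtain ⟨C, hC⟩ := (hf.sub hprim).const_of_ae_hasDerivAt_zero <| by
    filter_upwards [hderiv, hf'.ae_hasDerivAt_integral] with x hfx hprimx hx
    simpa using! (hfx hx).sub (hprimx hx a left_mem_uIcc)
  have hconst := (hC a left_mem_uIcc).trans (hC b right_mem_uIcc).symm
  simp only [Pi.sub_apply, intervalIntegral.integral_same, sub_zero] at hconst
  rw [hconst, sub_sub_cancel]

end AbsolutelyContinuous

section RiemannLebesgue

variable {E : Type*} [NormedAddCommGroup E] [NormedSpace ℂ E]

theorem tendsto_setIntegral_exp_smul_cocompact {s : Set ℝ} (hs : MeasurableSet s) (f : ℝ → E) :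
    Tendsto (fun w : ℝ ↦ ∫ x in s, Complex.exp (-(w * Complex.I) * x) • f x)
      (cocompact ℝ) (𝓝 0) := by
  have hscale : Tendsto (fun w : ℝ ↦ (2 * Real.pi)⁻¹ * w) (cocompact ℝ) (cocompact ℝ) :=
    tendsto_cocompact_mul_left₀ (inv_ne_zero Real.two_pi_pos.ne')
  refine ((Real.tendsto_integral_exp_smul_cocompact (s.indicator f)).comp hscale).congr fun w ↦ ?_
  rw [Function.comp_apply, ← integral_indicator hs]
  congr 1 with x
  have hphase : 2 * Real.pi * -(x * ((2 * Real.pi)⁻¹ * w)) = -(w * x) := by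
    field_simp
  rw [indicator_smul, Circle.smul_def, Real.fourierChar_apply, hphase]
  push_cast
  ring_nf

theorem tendsto_intervalIntegral_exp_smul_cocompact (f : ℝ → E) (a b : ℝ) :
    Tendsto (fun w : ℝ ↦ ∫ x in a..b, Complex.exp (-(w * Complex.I) * x) • f x)
      (cocompact ℝ) (𝓝 0) := by
  simpa only [intervalIntegral, sub_zero] using
    (tendsto_setIntegral_exp_smul_cocompact measurableSet_Ioc f).sub
      (tendsto_setIntegral_exp_smul_cocompact measurableSet_Ioc f)

end RiemannLebesgue

theorem eventually_cobounded_norm_le_norm_sub_mul {𝕜 : Type*} [NormedField 𝕜] (a c : 𝕜) :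
    ∀ᶠ z in Bornology.cobounded 𝕜, ‖a‖ ≤ ‖a - z * c‖ := by
  rcases eq_or_ne c 0 with rfl | hc
  · simp
  · filter_upwards [tendsto_norm_cobounded_atTop.eventually_ge_atTop (2 * ‖a‖ / ‖c‖)] with z hz
    have hzc : 2 * ‖a‖ ≤ ‖z * c‖ := by
      rwa [norm_mul, ← div_le_iff₀ (norm_pos_iff.2 hc)]
    have := norm_sub_norm_le (z * c) a
    rw [norm_sub_rev] at this
    linarith

/-- `y` is a Carathéodory solution of `-y'' + q y = lam y` on `[0, 1]` with derivative `y'`, for a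
complex potential `q`: `y'` is absolutely continuous and the equation holds almost everywhere. -/
structure IsSchrodingerSolution (q : ℝ → ℂ) (lam : ℂ) (y y' : ℝ → ℂ) : Prop where
  hasDerivWithinAt : ∀ x ∈ Icc (0 : ℝ) 1, HasDerivWithinAt y (y' x) (Icc 0 1) x
  absolutelyContinuous_deriv : AbsolutelyContinuousOnInterval y' 0 1
  ae_hasDerivAt_deriv : ∀ᵐ x : ℝ, x ∈ Icc (0 : ℝ) 1 → HasDerivAt y' ((q x - lam) * y x) x

/-- `lam` is an eigenvalue of the quasi-periodic problem `L_t(q)` with a complex potential `q`,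
stated through absolute continuity rather than through an integrable second derivative. -/
def IsQuasiPeriodicEigenvalue (q : ℝ → ℂ) (t : ℝ) (lam : ℂ) : Prop :=
  ∃ y y' : ℝ → ℂ, IsSchrodingerSolution q lam y y' ∧ (∃ x ∈ Icc (0 : ℝ) 1, y x ≠ 0) ∧
    y 1 = Complex.exp (Complex.I * t) * y 0 ∧ y' 1 = Complex.exp (Complex.I * t) * y' 0

theorem IsQPEigenvalue.isQuasiPeriodicEigenvalue {q : ℝ → ℝ} {t : ℝ} {lam : ℂ}
    (hlam : IsQPEigenvalue q t lam) : IsQuasiPeriodicEigenvalue (fun x ↦ q x) t lam := by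
  obtain ⟨y, g, h, hne, hyg, -, hh, hgh, hode, hy1, hg1⟩ := hlam
  have hh' : IntervalIntegrable h volume 0 1 :=
    (intervalIntegrable_iff_integrableOn_Icc_of_le zero_le_one).2 hh
  rw [← uIcc_of_le zero_le_one] at hgh
  refine ⟨y, g, ⟨hyg, absolutelyContinuousOnInterval_of_eq_add_integral hh' hgh, ?_⟩, hne, hy1, hg1⟩
  filter_upwards [ae_hasDerivAt_of_eq_add_integral hh' hgh,
    (ae_restrict_iff' measurableSet_Icc).1 hode] with x hderiv hx hmem
  have hhx : h x = (q x - lam) * y x := by linear_combination -hx hmem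
  exact hhx ▸ hderiv (Icc_subset_uIcc hmem)

/-- The coefficient of `exp (μ x)` when a function with value `y x` and derivative `y' x` is
expanded in `exp (μ x)` and `exp (-μ x)` by variation of parameters, up to the factor `2 μ`. -/
noncomputable def waveAmplitude (μ : ℂ) (y y' : ℝ → ℂ) (x : ℝ) : ℂ :=
  Complex.exp (-μ * x) * (y' x + μ * y x)

/-- The Fourier–Laplace integral of `q` over `[0, 1]`, at a complex frequency. -/
noncomputable def expIntegral (q : ℝ → ℂ) (ν : ℂ) : ℂ :=
  ∫ s in (0 : ℝ)..1, Complex.exp (-ν * s) * q s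

theorem intervalIntegrable_exp_mul {f : ℝ → ℂ} {a b : ℝ} (hf : IntervalIntegrable f volume a b)
    (ν : ℂ) : IntervalIntegrable (fun s : ℝ ↦ Complex.exp (ν * s) * f s) volume a b :=
  hf.continuousOn_mul (by fun_prop)

section Amplitude

variable {q y y' : ℝ → ℂ} {μ : ℂ} {x : ℝ}

theorem two_mul_mul_eq_waveAmplitude_sub (μ : ℂ) (y y' : ℝ → ℂ) (x : ℝ) :
    2 * μ * y x = Complex.exp (μ * x) * waveAmplitude μ y y' x -
      Complex.exp (-μ * x) * waveAmplitude (-μ) y y' x := by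
  have hexp : Complex.exp (μ * x) * Complex.exp (-μ * x) = 1 := by
    rw [← Complex.exp_add, neg_mul, add_neg_cancel, Complex.exp_zero]
  simp only [waveAmplitude, neg_neg]
  linear_combination (-2 * μ * y x) * hexp

theorem waveAmplitude_integrand_sub_eq (μ : ℂ) (q y y' : ℝ → ℂ) (x : ℝ) :
    2 * μ * (Complex.exp (-μ * x) * (q x * y x)) -
        (waveAmplitude μ y y' 0 * q x -
          waveAmplitude (-μ) y y' 0 * (Complex.exp (-(2 * μ) * x) * q x)) =
      ((waveAmplitude μ y y' x - waveAmplitude μ y y' 0) - Complex.exp (-(2 * μ) * x) *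
        (waveAmplitude (-μ) y y' x - waveAmplitude (-μ) y y' 0)) * q x := by
  have hcancel : Complex.exp (-μ * x) * Complex.exp (μ * x) = 1 := by
    rw [← Complex.exp_add, neg_mul, neg_add_cancel, Complex.exp_zero]
  have hsq : Complex.exp (-μ * x) * Complex.exp (-μ * x) = Complex.exp (-(2 * μ) * x) := by
    rw [← Complex.exp_add]
    ring_nf
  linear_combination Complex.exp (-μ * x) * q x * two_mul_mul_eq_waveAmplitude_sub μ y y' x +
    waveAmplitude μ y y' x * q x * hcancel - waveAmplitude (-μ) y y' x * q x * hsq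

theorem waveAmplitude_one_of_quasiPeriodic {ρ : ℂ} (hy : y 1 = ρ * y 0) (hy' : y' 1 = ρ * y' 0) :
    waveAmplitude μ y y' 1 = Complex.exp (-μ) * ρ * waveAmplitude μ y y' 0 := by
  simp only [waveAmplitude, hy, hy', Complex.ofReal_one, Complex.ofReal_zero, mul_one, mul_zero,
    Complex.exp_zero]
  ring

theorem norm_exp_mul_ofReal_eq_one (hμ : μ.re = 0) (x : ℝ) : ‖Complex.exp (μ * x)‖ = 1 := by
  simp [Complex.norm_exp, hμ]

theorem IsSchrodingerSolution.continuousOn {lam : ℂ} (hy : IsSchrodingerSolution q lam y y') :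
    ContinuousOn y (Icc 0 1) :=
  fun x hx ↦ (hy.hasDerivWithinAt x hx).continuousWithinAt

theorem IsSchrodingerSolution.absolutelyContinuous {lam : ℂ}
    (hy : IsSchrodingerSolution q lam y y') : AbsolutelyContinuousOnInterval y 0 1 := by
  obtain ⟨C, hC⟩ := hy.absolutelyContinuous_deriv.exists_bound
  refine absolutelyContinuousOnInterval_of_hasDerivWithinAt_of_norm_le ?_ hC
  rw [uIcc_of_le zero_le_one]
  exact hy.hasDerivWithinAt

namespace IsSchrodingerSolution

theorem neg_wavenumber (hy : IsSchrodingerSolution q (-μ ^ 2) y y') :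
    IsSchrodingerSolution q (-(-μ) ^ 2) y y' := by
  rwa [neg_sq]

theorem absolutelyContinuous_waveAmplitude (hy : IsSchrodingerSolution q (-μ ^ 2) y y') :
    AbsolutelyContinuousOnInterval (waveAmplitude μ y y') 0 1 := by
  have hexp : ContDiff ℝ 1 fun x : ℝ ↦ Complex.exp (-μ * x) :=
    (contDiff_const.mul Complex.ofRealCLM.contDiff).cexp
  exact hexp.contDiffOn.absolutelyContinuousOnInterval.smul
    (hy.absolutelyContinuous_deriv.add (hy.absolutelyContinuous.const_smul μ))

theorem ae_hasDerivAt_waveAmplitude (hy : IsSchrodingerSolution q (-μ ^ 2) y y') :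
    ∀ᵐ x : ℝ, x ∈ Icc (0 : ℝ) 1 →
      HasDerivAt (waveAmplitude μ y y') (Complex.exp (-μ * x) * (q x * y x)) x := by
  filter_upwards [hy.ae_hasDerivAt_deriv, Measure.ae_ne volume 0, Measure.ae_ne volume 1]
    with x hderiv h0 h1 hx
  have hyx : HasDerivAt y (y' x) x := (hy.hasDerivWithinAt x hx).hasDerivAt
    (Icc_mem_nhds (hx.1.lt_of_ne h0.symm) (hx.2.lt_of_ne h1))
  have hexp : HasDerivAt (fun x : ℝ ↦ Complex.exp (-μ * x)) (Complex.exp (-μ * x) * -μ) x := by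
    simpa using (((hasDerivAt_id x).ofReal_comp).const_mul (-μ)).cexp
  refine (hexp.mul ((hderiv hx).add (hyx.const_mul μ))).congr_deriv ?_
  simp only [Pi.add_apply]
  ring

theorem integral_exp_mul_eq_waveAmplitude_sub (hy : IsSchrodingerSolution q (-μ ^ 2) y y')
    (hq : IntervalIntegrable q volume 0 1) (hx : x ∈ Icc (0 : ℝ) 1) :
    ∫ s in (0 : ℝ)..x, Complex.exp (-μ * s) * (q s * y s) =
      waveAmplitude μ y y' x - waveAmplitude μ y y' 0 := by
  have hsub : uIcc 0 x ⊆ uIcc (0 : ℝ) 1 := uIcc_subset_uIcc_left (Icc_subset_uIcc hx)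
  have hint := intervalIntegrable_exp_mul
    (hq.mul_continuousOn hy.absolutelyContinuous.continuousOn) (-μ)
  refine integral_eq_sub_of_ae_hasDerivAt (hy.absolutelyContinuous_waveAmplitude.mono hsub) ?_
    (hint.mono_set hsub)
  filter_upwards [hy.ae_hasDerivAt_waveAmplitude] with s hs hmem
  exact hs (uIcc_of_le (zero_le_one' ℝ) ▸ hsub hmem)

theorem norm_waveAmplitude_sub_le (hy : IsSchrodingerSolution q (-μ ^ 2) y y')
    (hq : IntervalIntegrable q volume 0 1) (hμ : μ.re = 0) {M : ℝ}
    (hM : ∀ s ∈ Icc (0 : ℝ) 1, ‖y s‖ ≤ M) (hx : x ∈ Icc (0 : ℝ) 1) :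
    ‖waveAmplitude μ y y' x - waveAmplitude μ y y' 0‖ ≤ M * ∫ s in (0 : ℝ)..1, ‖q s‖ := by
  have hM0 : 0 ≤ M := (norm_nonneg _).trans (hM x hx)
  have hint : IntervalIntegrable (fun s ↦ M * ‖q s‖) volume 0 1 := hq.norm.const_mul M
  rw [← hy.integral_exp_mul_eq_waveAmplitude_sub hq hx, ← intervalIntegral.integral_const_mul]
  calc ‖∫ s in (0 : ℝ)..x, Complex.exp (-μ * s) * (q s * y s)‖
      ≤ ∫ s in (0 : ℝ)..x, M * ‖q s‖ := by
        refine intervalIntegral.norm_integral_le_of_norm_le hx.1 (ae_of_all _ fun s hs ↦ ?_)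
          (hint.mono_set (uIcc_subset_uIcc_left (Icc_subset_uIcc hx)))
        rw [norm_mul, norm_exp_mul_ofReal_eq_one (by simpa using hμ), one_mul, norm_mul, mul_comm]
        gcongr
        exact hM s ⟨hs.1.le, hs.2.trans hx.2⟩
    _ ≤ ∫ s in (0 : ℝ)..1, M * ‖q s‖ :=
        intervalIntegral.integral_mono_interval le_rfl hx.1 hx.2
          (ae_of_all _ fun s ↦ mul_nonneg hM0 (norm_nonneg _)) hint

theorem norm_mul_norm_le (hy : IsSchrodingerSolution q (-μ ^ 2) y y')
    (hq : IntervalIntegrable q volume 0 1) (hμ : μ.re = 0)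
    (hμq : 2 * ∫ s in (0 : ℝ)..1, ‖q s‖ ≤ ‖μ‖) (hx : x ∈ Icc (0 : ℝ) 1) :
    ‖μ‖ * ‖y x‖ ≤ ‖waveAmplitude μ y y' 0‖ + ‖waveAmplitude (-μ) y y' 0‖ := by
  obtain ⟨x₀, hx₀, hmax⟩ :=
    isCompact_Icc.exists_isMaxOn (nonempty_Icc.2 zero_le_one) hy.continuousOn.norm
  have hM : ∀ s ∈ Icc (0 : ℝ) 1, ‖y s‖ ≤ ‖y x₀‖ := fun s hs ↦ hmax hs
  have hμ' : (-μ).re = 0 := by simpa using hμ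
  have hpos := hy.norm_waveAmplitude_sub_le hq hμ hM hx₀
  have hneg := hy.neg_wavenumber.norm_waveAmplitude_sub_le hq hμ' hM hx₀
  have hrep : 2 * ‖μ‖ * ‖y x₀‖ ≤ ‖waveAmplitude μ y y' x₀‖ + ‖waveAmplitude (-μ) y y' x₀‖ :=
    calc 2 * ‖μ‖ * ‖y x₀‖ = ‖2 * μ * y x₀‖ := by simp
      _ ≤ ‖Complex.exp (μ * x₀) * waveAmplitude μ y y' x₀‖ +
          ‖Complex.exp (-μ * x₀) * waveAmplitude (-μ) y y' x₀‖ :=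
        two_mul_mul_eq_waveAmplitude_sub μ y y' x₀ ▸ norm_sub_le _ _
      _ = _ := by simp only [norm_mul, norm_exp_mul_ofReal_eq_one hμ,
          norm_exp_mul_ofReal_eq_one hμ', one_mul]
  have hsmall := mul_le_mul_of_nonneg_left hμq (norm_nonneg (y x₀))
  have hle := mul_le_mul_of_nonneg_left (hM x hx) (norm_nonneg μ)
  linarith [norm_le_norm_add_norm_sub' (waveAmplitude μ y y' x₀) (waveAmplitude μ y y' 0),
    norm_le_norm_add_norm_sub' (waveAmplitude (-μ) y y' x₀) (waveAmplitude (-μ) y y' 0)]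

theorem norm_waveAmplitude_increment_sub_le (hy : IsSchrodingerSolution q (-μ ^ 2) y y')
    (hq : IntervalIntegrable q volume 0 1) (hμ : μ.re = 0) {M : ℝ}
    (hM : ∀ s ∈ Icc (0 : ℝ) 1, ‖y s‖ ≤ M) :
    ‖2 * μ * (waveAmplitude μ y y' 1 - waveAmplitude μ y y' 0) -
        (waveAmplitude μ y y' 0 * (∫ s in (0 : ℝ)..1, q s) -
          waveAmplitude (-μ) y y' 0 * expIntegral q (2 * μ))‖ ≤
      2 * M * (∫ s in (0 : ℝ)..1, ‖q s‖) ^ 2 := by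
  have hexp := intervalIntegrable_exp_mul hq (-(2 * μ))
  have hqy := intervalIntegrable_exp_mul
    (hq.mul_continuousOn hy.absolutelyContinuous.continuousOn) (-μ)
  have hbound : 2 * M * (∫ s in (0 : ℝ)..1, ‖q s‖) ^ 2 =
      ∫ s in (0 : ℝ)..1, 2 * (M * ∫ s in (0 : ℝ)..1, ‖q s‖) * ‖q s‖ := by
    rw [intervalIntegral.integral_const_mul]
    ring
  rw [← hy.integral_exp_mul_eq_waveAmplitude_sub hq (right_mem_Icc.2 zero_le_one),
    expIntegral, ← intervalIntegral.integral_const_mul, ← intervalIntegral.integral_const_mul,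
    ← intervalIntegral.integral_const_mul,
    ← intervalIntegral.integral_sub (hq.const_mul _) (hexp.const_mul _),
    ← intervalIntegral.integral_sub (hqy.const_mul _)
      ((hq.const_mul _).sub (hexp.const_mul _)), hbound]
  refine intervalIntegral.norm_integral_le_of_norm_le zero_le_one (ae_of_all _ fun s hs ↦ ?_)
    (hq.norm.const_mul _)
  rw [waveAmplitude_integrand_sub_eq μ q y y' s, norm_mul]
  gcongr
  have hμ' : (-μ).re = 0 := by simpa using hμ
  have hs' : s ∈ Icc (0 : ℝ) 1 := Ioc_subset_Icc_self hs
  calc ‖(waveAmplitude μ y y' s - waveAmplitude μ y y' 0) -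
        Complex.exp (-(2 * μ) * s) * (waveAmplitude (-μ) y y' s - waveAmplitude (-μ) y y' 0)‖
      ≤ ‖waveAmplitude μ y y' s - waveAmplitude μ y y' 0‖ +
        ‖waveAmplitude (-μ) y y' s - waveAmplitude (-μ) y y' 0‖ := by
        refine (norm_sub_le _ _).trans_eq ?_
        rw [norm_mul, norm_exp_mul_ofReal_eq_one (by simp [hμ]), one_mul]
    _ ≤ 2 * (M * ∫ s in (0 : ℝ)..1, ‖q s‖) := by
        rw [two_mul]
        exact add_le_add (hy.norm_waveAmplitude_sub_le hq hμ hM hs')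
          (hy.neg_wavenumber.norm_waveAmplitude_sub_le hq hμ' hM hs')

end IsSchrodingerSolution

end Amplitude

theorem min_norm_le_of_norm_mul_sub_mul_le {𝕜 : Type*} [NormedField 𝕜] {u v a b r r' : 𝕜} {ε : ℝ}
    (huv : 0 < ‖u‖ + ‖v‖) (hv : ‖v * a - u * r‖ ≤ ε * (‖u‖ + ‖v‖))
    (hu : ‖u * b - v * r'‖ ≤ ε * (‖u‖ + ‖v‖)) :
    min ‖a‖ ‖b‖ ≤ ‖r‖ + ‖r'‖ + 2 * ε := by
  have hva : ‖v‖ * ‖a‖ ≤ ‖u‖ * ‖r‖ + ε * (‖u‖ + ‖v‖) := by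
    simpa only [norm_mul] using (norm_le_norm_add_norm_sub' _ _).trans (add_le_add_right hv _)
  have hub : ‖u‖ * ‖b‖ ≤ ‖v‖ * ‖r'‖ + ε * (‖u‖ + ‖v‖) := by
    simpa only [norm_mul] using (norm_le_norm_add_norm_sub' _ _).trans (add_le_add_right hu _)
  refine le_of_mul_le_mul_left ?_ huv
  calc (‖u‖ + ‖v‖) * min ‖a‖ ‖b‖ = ‖v‖ * min ‖a‖ ‖b‖ + ‖u‖ * min ‖a‖ ‖b‖ := by ring
    _ ≤ ‖v‖ * ‖a‖ + ‖u‖ * ‖b‖ := by gcongr; exacts [min_le_left _ _, min_le_right _ _]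
    _ ≤ (‖u‖ * ‖r‖ + ε * (‖u‖ + ‖v‖)) + (‖v‖ * ‖r'‖ + ε * (‖u‖ + ‖v‖)) := add_le_add hva hub
    _ ≤ (‖u‖ + ‖v‖) * (‖r‖ + ‖r'‖ + 2 * ε) := by
        linarith [mul_nonneg (norm_nonneg u) (norm_nonneg r'),
          mul_nonneg (norm_nonneg v) (norm_nonneg r)]

theorem IsQuasiPeriodicEigenvalue.min_norm_integral_le {q : ℝ → ℂ} {t : ℝ} {μ : ℂ}
    (hev : IsQuasiPeriodicEigenvalue q t (-μ ^ 2)) (hq : IntervalIntegrable q volume 0 1)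
    (hμ : μ.re = 0) (hμ0 : μ ≠ 0) (hμq : 2 * ∫ s in (0 : ℝ)..1, ‖q s‖ ≤ ‖μ‖)
    (hμt : Complex.exp μ * Complex.exp (Complex.I * t) = 1) :
    min ‖∫ s in (0 : ℝ)..1, q s‖
        ‖(∫ s in (0 : ℝ)..1, q s) - 2 * μ * (Complex.exp (Complex.I * t) ^ 2 - 1)‖ ≤
      ‖expIntegral q (-(2 * μ))‖ + ‖expIntegral q (2 * μ)‖ +
        2 * (2 * (∫ s in (0 : ℝ)..1, ‖q s‖) ^ 2 / ‖μ‖) := by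
  obtain ⟨y, y', hy, ⟨x, hx, hyx⟩, hy1, hy1'⟩ := hev
  set ρ := Complex.exp (Complex.I * t)
  set K := ∫ s in (0 : ℝ)..1, ‖q s‖
  set u := waveAmplitude μ y y' 0 with hu
  set v := waveAmplitude (-μ) y y' 0 with hv
  have hμnorm : 0 < ‖μ‖ := norm_pos_iff.2 hμ0
  have hμ' : (-μ).re = 0 := by simpa using hμ
  have hu1 : waveAmplitude μ y y' 1 = ρ ^ 2 * u := by
    have hexp : Complex.exp (-μ) = ρ := by rw [Complex.exp_neg, inv_eq_of_mul_eq_one_right hμt]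
    rw [waveAmplitude_one_of_quasiPeriodic hy1 hy1', hexp, sq]
  have hv1 : waveAmplitude (-μ) y y' 1 = v := by
    rw [waveAmplitude_one_of_quasiPeriodic hy1 hy1', neg_neg, hμt, one_mul]
  have hyuv : ∀ s ∈ Icc (0 : ℝ) 1, ‖y s‖ ≤ (‖u‖ + ‖v‖) / ‖μ‖ := fun s hs ↦ by
    rw [le_div_iff₀' hμnorm]
    exact hy.norm_mul_norm_le hq hμ hμq hs
  have huv : 0 < ‖u‖ + ‖v‖ :=
    (mul_pos hμnorm (norm_pos_iff.2 hyx)).trans_le (hy.norm_mul_norm_le hq hμ hμq hx)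
  have hpos := hy.norm_waveAmplitude_increment_sub_le hq hμ hyuv
  have hneg := hy.neg_wavenumber.norm_waveAmplitude_increment_sub_le hq hμ' hyuv
  have herror : 2 * ((‖u‖ + ‖v‖) / ‖μ‖) * K ^ 2 = 2 * K ^ 2 / ‖μ‖ * (‖u‖ + ‖v‖) := by ring
  rw [hu1, ← hu, ← hv, herror, ← norm_neg] at hpos
  rw [hv1, neg_neg, sub_self, mul_zero, zero_sub, norm_neg, ← hu, ← hv, herror, mul_neg] at hneg
  refine min_norm_le_of_norm_mul_sub_mul_le huv hneg ?_
  convert! hpos using 2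
  ring

theorem tendsto_expIntegral_mul_I_cocompact (q : ℝ → ℂ) :
    Tendsto (fun w : ℝ ↦ expIntegral q (w * Complex.I)) (cocompact ℝ) (𝓝 0) :=
  tendsto_intervalIntegral_exp_smul_cocompact q 0 1

theorem tendsto_expIntegral_error_cocompact (q : ℝ → ℂ) (C : ℝ) :
    Tendsto (fun w : ℝ ↦ ‖expIntegral q (-(2 * (w * Complex.I)))‖ +
      ‖expIntegral q (2 * (w * Complex.I))‖ + 2 * (C / ‖w * Complex.I‖)) (cocompact ℝ) (𝓝 0) := by
  have hexp {c : ℝ} (hc : c ≠ 0) :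
      Tendsto (fun w : ℝ ↦ ‖expIntegral q (↑(c * w) * Complex.I)‖) (cocompact ℝ) (𝓝 0) := by
    simpa using ((tendsto_expIntegral_mul_I_cocompact q).comp (tendsto_cocompact_mul_left₀ hc)).norm
  have hinv : Tendsto (fun w : ℝ ↦ C / ‖w * Complex.I‖) (cocompact ℝ) (𝓝 0) := by
    simpa using (tendsto_norm_cocompact_atTop (E := ℝ)).const_div_atTop C
  have hsum := ((hexp (neg_ne_zero.2 two_ne_zero)).add (hexp two_ne_zero)).add (hinv.const_mul 2)
  simpa [mul_assoc] using hsum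

theorem eventually_norm_integral_le {q : ℝ → ℂ} (hq : IntervalIntegrable q volume 0 1)
    (t : ℝ) : ∀ᶠ w : ℝ in cocompact ℝ,
      Complex.exp (w * Complex.I) * Complex.exp (Complex.I * t) = 1 →
      IsQuasiPeriodicEigenvalue q t ((w ^ 2 : ℝ) : ℂ) →
      ‖∫ s in (0 : ℝ)..1, q s‖ ≤ ‖expIntegral q (-(2 * (w * Complex.I)))‖ +
        ‖expIntegral q (2 * (w * Complex.I))‖ +
        2 * (2 * (∫ s in (0 : ℝ)..1, ‖q s‖) ^ 2 / ‖w * Complex.I‖) := by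
  have hcobounded : Tendsto (fun w : ℝ ↦ 2 * (w * Complex.I)) (cocompact ℝ)
      (Bornology.cobounded ℂ) := by
    rw [← tendsto_norm_atTop_iff_cobounded]
    simpa using (tendsto_norm_cocompact_atTop (E := ℝ)).const_mul_atTop (two_pos (α := ℝ))
  filter_upwards [hcobounded.eventually (eventually_cobounded_norm_le_norm_sub_mul
      (∫ s in (0 : ℝ)..1, q s) (Complex.exp (Complex.I * t) ^ 2 - 1)),
    (tendsto_norm_cocompact_atTop (E := ℝ)).eventually_gt_atTop 0,
    (tendsto_norm_cocompact_atTop (E := ℝ)).eventually_ge_atTop (2 * ∫ s in (0 : ℝ)..1, ‖q s‖)]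
    with w hmin hpos hlarge hwt hev
  have hlam : ((w ^ 2 : ℝ) : ℂ) = -(w * Complex.I) ^ 2 := by simp [mul_pow]
  have hnorm : ‖(w : ℂ) * Complex.I‖ = ‖w‖ := by simp
  rw [hlam] at hev
  simpa only [min_eq_left hmin] using hev.min_norm_integral_le hq (by simp)
    (norm_pos_iff.1 (hnorm ▸ hpos)) (hnorm ▸ hlarge) hwt

theorem meanValue_eq_zero_of_spectrum_general
    (q : ℝ → ℂ) (hq : IntegrableOn q (Icc (0 : ℝ) 1)) (t : ℝ)
    (hspec : {n : ℤ |
      IsQuasiPeriodicEigenvalue q t (((2 * n * Real.pi - t) ^ 2 : ℝ) : ℂ)}.Infinite) :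
    ∫ x in (0 : ℝ)..1, q x = 0 := by
  have hqi : IntervalIntegrable q volume 0 1 :=
    (intervalIntegrable_iff_integrableOn_Icc_of_le zero_le_one).2 hq
  have hω : Tendsto (fun n : ℤ ↦ 2 * n * Real.pi - t) cofinite (cocompact ℝ) := by
    refine ((affineHomeomorph (2 * Real.pi) (-t) Real.two_pi_pos.ne').isClosedEmbedding
      |>.tendsto_cocompact.comp Int.tendsto_coe_cofinite).congr fun n ↦ ?_
    simp only [Function.comp_apply, affineHomeomorph_apply]
    ring
  have hexp (n : ℤ) : Complex.exp (↑(2 * n * Real.pi - t) * Complex.I) *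
      Complex.exp (Complex.I * t) = 1 := by
    rw [← Complex.exp_add, Complex.exp_eq_one_iff]
    exact ⟨n, by push_cast; ring⟩
  have hnorm : ‖∫ s in (0 : ℝ)..1, q s‖ ≤ 0 :=
    ge_of_tendsto_of_frequently ((tendsto_expIntegral_error_cocompact q _).comp hω) <|
      (frequently_cofinite_iff_infinite.2 hspec).mp <|
        (hω.eventually (eventually_norm_integral_le hqi t)).mono
          fun n hn ↦ hn (hexp n)
  exact norm_le_zero_iff.1 hnorm

/-- If `(2nπ − t)²` is an eigenvalue of `L_t(q)` for every `n ≥ 1`, then the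
mean value of the potential vanishes: `∫₀¹ q = 0`. -/
theorem meanValue_eq_zero_of_spectrum
    (q : ℝ → ℝ) (hq : IntegrableOn q (Icc (0:ℝ) 1))
    (t : ℝ) (ht : t ∈ Ico (0:ℝ) (2 * Real.pi))
    (hspec : ∀ n : ℕ, 1 ≤ n →
      IsQPEigenvalue q t (((2 * n * Real.pi - t) ^ 2 : ℝ) : ℂ)) :
    ∫ x in (0:ℝ)..1, q x = 0 := by
  have hmean := meanValue_eq_zero_of_spectrum_general (fun x ↦ q x) hq.ofReal t <|
    infinite_of_injective_forall_mem (f := fun n : ℕ ↦ ((n + 1 : ℕ) : ℤ))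
      (Nat.cast_injective.comp Nat.succ_injective)
      fun n ↦ by simpa using (hspec (n + 1) n.succ_pos).isQuasiPeriodicEigenvalue
  exact_mod_cast intervalIntegral.integral_ofReal.symm.trans hmean
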